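/- arXiv:2602.08780 — 2 statements merged into one kernel-verified Lean document; each statement's English description precedes it below -/
import Mathlib

section
/- Fix natural numbers N, t, s with t + s ≤ N. Then (α, β) satisfies the (t, s) semi-insdel non-deformation conditions (C4) if and only if (α, β) satisfies the (t+s)-deletion non-deformation conditions. (This is the combinatorial core of Lemma 2: the semi-insdel conditions for s deletions followed by t insertions are equivalent to the (t+s)-deletion conditions of Aydin et al.) -/
open Finset

/-!
By Pascal's rule, a sum along a diagonal weighted by row `n + 1` of Pascal's triangle splits into
two such sums weighted by row `n`, based at `(a, b)` and `(a + 1, b + 1)`. After `j` applications,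
the semi-insdel sum of index `j` at `(a, b)` is a combination of the deletion sums at
`(a + i, b + i)` with `i ≤ j`, and the bound `a, b ≤ t + s - j` keeps all these base points within
the range of the deletion conditions. Conversely, the deletion conditions are the case `j = 0`.
-/

section ChooseSums

variable {M : Type*} [AddCommMonoid M] {N n : ℕ}

theorem sum_range_choose_nsmul_of_le (f : ℕ → M) (hn : n ≤ N) :
    ∑ k ∈ range (N + 1), n.choose k • f k = ∑ k ∈ range (n + 1), n.choose k • f k := by
  refine eventually_constant_sum (fun k hk => ?_) (Nat.succ_le_succ hn)
  rw [Nat.choose_eq_zero_of_lt hk, zero_nsmul]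

theorem sum_range_choose_succ_nsmul (f : ℕ → M) (hn : n < N) :
    ∑ k ∈ range (N + 1), (n + 1).choose k • f k =
      ∑ k ∈ range (N + 1), n.choose k • f k + ∑ k ∈ range (N + 1), n.choose k • f (k + 1) := by
  rw [sum_range_choose_nsmul_of_le f hn, sum_range_choose_nsmul_of_le f hn.le,
    sum_range_choose_nsmul_of_le (fun k => f (k + 1)) hn.le]
  exact sum_choose_succ_nsmul (fun k _ => f k) n

theorem sum_range_choose_add_nsmul_eq_zero {m : ℕ} {g : ℕ → ℕ → M}
    (hg : ∀ a b : ℕ, a ≤ m → b ≤ m →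
      ∑ k ∈ range (N + 1), n.choose k • g (k + a) (k + b) = 0)
    (j : ℕ) {a b : ℕ} (hj : n + j ≤ N) (ha : a + j ≤ m) (hb : b + j ≤ m) :
    ∑ k ∈ range (N + 1), (n + j).choose k • g (k + a) (k + b) = 0 := by
  induction j generalizing a b with
  | zero => exact hg a b ha hb
  | succ j ih =>
    have base : ∑ k ∈ range (N + 1), (n + j).choose k • g (k + a) (k + b) = 0 :=
      ih (by omega) (by omega) (by omega)
    have shifted : ∑ k ∈ range (N + 1), (n + j).choose k • g (k + 1 + a) (k + 1 + b) = 0 := by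
      simp only [Nat.add_right_comm _ 1]
      exact ih (a := a + 1) (b := b + 1) (by omega) (by omega) (by omega)
    calc ∑ k ∈ range (N + 1), (n + j + 1).choose k • g (k + a) (k + b)
      _ = ∑ k ∈ range (N + 1), (n + j).choose k • g (k + a) (k + b) +
          ∑ k ∈ range (N + 1), (n + j).choose k • g (k + 1 + a) (k + 1 + b) :=
        sum_range_choose_succ_nsmul (fun k => g (k + a) (k + b)) (by omega)
      _ = 0 := by rw [base, shifted, add_zero]

end ChooseSums

theorem semiInsdel_iff_deletion_nonDeformation_general {M : Type*} [AddCommMonoid M]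
    {N t s : ℕ} (hts : t + s ≤ N) (g : ℕ → ℕ → M) :
    (∀ j a b : ℕ, j ≤ t → a ≤ t + s - j → b ≤ t + s - j →
      ∑ k ∈ range (N + 1), (N - t - s + j).choose k • g (k + a) (k + b) = 0) ↔
    (∀ a b : ℕ, a ≤ t + s → b ≤ t + s →
      ∑ k ∈ range (N + 1), (N - (t + s)).choose k • g (k + a) (k + b) = 0) := by
  rw [Nat.sub_sub]
  constructor
  · intro semiInsdel a b
    exact semiInsdel 0 a b t.zero_le
  · intro deletion j a b hj ha hb
    exact sum_range_choose_add_nsmul_eq_zero deletion j (by omega) (by omega) (by omega)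

theorem semiInsdel_iff_deletion_nonDeformation
    (N t s : ℕ) (hts : t + s ≤ N)
    (α β : ℕ → ℂ) (hα : ∀ k : ℕ, N < k → α k = 0) (hβ : ∀ k : ℕ, N < k → β k = 0) :
    (∀ j a' b' : ℕ, j ≤ t → a' ≤ t + s - j → b' ≤ t + s - j →
      ∑ k ∈ Finset.range (N + 1), ((N - t - s + j).choose k : ℂ) / ((Real.sqrt ((N.choose (k + a') * N.choose (k + b') : ℕ)) : ℝ) : ℂ) * ((starRingEnd ℂ) (α (k + a')) * α (k + b') - (starRingEnd ℂ) (β (k + a')) * β (k + b')) = 0) ↔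
    (∀ a' b' : ℕ, a' ≤ t + s → b' ≤ t + s →
      ∑ k ∈ Finset.range (N + 1), ((N - (t + s)).choose k : ℂ) / ((Real.sqrt ((N.choose (k + a') * N.choose (k + b') : ℕ)) : ℝ) : ℂ) * ((starRingEnd ℂ) (α (k + a')) * α (k + b') - (starRingEnd ℂ) (β (k + a')) * β (k + b')) = 0) := by
  simpa only [nsmul_eq_mul, mul_div_assoc', div_mul_eq_mul_div] using
    semiInsdel_iff_deletion_nonDeformation_general hts fun x y =>
      (starRingEnd ℂ (α x) * α y - starRingEnd ℂ (β x) * β y) /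
        (Real.sqrt (N.choose x * N.choose y : ℕ) : ℂ)
end

section
/- Fix natural numbers N, t, s with t + s ≤ N. Then (α, β) satisfies the (t+s)-insertion orthogonality conditions (C1) if and only if (α, β) satisfies the (t, s) semi-insdel orthogonality conditions (C3). (Hence for permutation-invariant codes, correcting t insertions together with s deletions imposes the same orthogonality constraints as correcting t+s pure insertions.) -/
open Finset

/-! With `u = t + s`, the conditions at level `j` concern the sums
`S m a b = ∑ k, C(m, k) K(k + a, k + b)`, where `m = N - u + j` and
`K(i, l) = conj(α i) β l / √(C(N, i) C(N, l))`. Pascal's rule gives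
`S (m + 1) a b = S m a b + S m (a + 1) (b + 1)`. Level `j + 1` allows shifts one smaller than
level `j`, so both sums on the right are constrained at level `j`, and level `0` implies all
levels up to `u`. Hence (C1) and (C3) are both equivalent to their common level `0`. -/

section DiagonalBinomialSum

variable {M : Type*} [AddCommMonoid M]

/-- The binomially weighted sum `∑ k, C(m, k) K(k + a, k + b)` of a kernel `K` along the diagonal
through `(a, b)`: the left-hand side of an orthogonality condition with shifts `a` and `b`.
It stops at `k = m`, beyond which the binomial coefficients vanish, so that it does not depend on
the code length `N`. -/
def diagonalBinomialSum (K : ℕ → ℕ → M) (m a b : ℕ) : M :=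
  ∑ k ∈ range (m + 1), m.choose k • K (k + a) (k + b)

theorem sum_range_choose_nsmul_eq_diagonalBinomialSum (K : ℕ → ℕ → M) {m n : ℕ} (hmn : m ≤ n)
    (a b : ℕ) :
    ∑ k ∈ range (n + 1), m.choose k • K (k + a) (k + b) = diagonalBinomialSum K m a b := by
  refine (sum_subset (range_mono (by lia)) fun k _ hk ↦ ?_).symm
  rw [Nat.choose_eq_zero_of_lt (by simpa [Nat.succ_le_iff] using hk), zero_nsmul]

theorem diagonalBinomialSum_succ (K : ℕ → ℕ → M) (m a b : ℕ) :
    diagonalBinomialSum K (m + 1) a b =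
      diagonalBinomialSum K m a b + diagonalBinomialSum K m (a + 1) (b + 1) := by
  simpa only [diagonalBinomialSum, add_right_comm, add_assoc] using
    sum_choose_succ_nsmul (fun k _ ↦ K (k + a) (k + b)) m

theorem diagonalBinomialSum_add_eq_zero {K : ℕ → ℕ → M} {m u : ℕ}
    (h : ∀ a b, a ≤ u → b ≤ u → diagonalBinomialSum K m a b = 0) (j : ℕ) :
    ∀ a b, a + j ≤ u → b + j ≤ u → diagonalBinomialSum K (m + j) a b = 0 := by
  induction j with
  | zero => exact h
  | succ j ih =>
    intro a b ha hb
    rw [← add_assoc, diagonalBinomialSum_succ, ih a b (by lia) (by lia),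
      ih (a + 1) (b + 1) (by lia) (by lia), add_zero]

end DiagonalBinomialSum

theorem insertion_iff_semiInsdel_orthogonality_general {M : Type*} [AddCommMonoid M]
    (K : ℕ → ℕ → M) {N t s : ℕ} (hts : t + s ≤ N) :
    (∀ j a b : ℕ, j ≤ t + s → a ≤ t + s - j → b ≤ t + s - j →
      ∑ k ∈ range (N + 1), (N - (t + s) + j).choose k • K (k + a) (k + b) = 0) ↔
    (∀ j a b : ℕ, j ≤ t → a ≤ t + s - j → b ≤ t + s - j →
      ∑ k ∈ range (N + 1), (N - t - s + j).choose k • K (k + a) (k + b) = 0) := by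
  rw [Nat.sub_sub]
  refine ⟨fun h j a b hj ↦ h j a b (by lia), fun h j a b hj ha hb ↦ ?_⟩
  have level_zero (a b : ℕ) (ha : a ≤ t + s) (hb : b ≤ t + s) :
      diagonalBinomialSum K (N - (t + s)) a b = 0 := by
    rw [← sum_range_choose_nsmul_eq_diagonalBinomialSum K (Nat.sub_le N (t + s))]
    exact h 0 a b (Nat.zero_le t) ha hb
  rw [sum_range_choose_nsmul_eq_diagonalBinomialSum K (by lia)]
  exact diagonalBinomialSum_add_eq_zero level_zero j a b (by lia) (by lia)

theorem insertion_iff_semiInsdel_orthogonality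
    (N t s : ℕ) (hts : t + s ≤ N)
    (α β : ℕ → ℂ) (hα : ∀ k : ℕ, N < k → α k = 0) (hβ : ∀ k : ℕ, N < k → β k = 0) :
    (∀ j a' b' : ℕ, j ≤ t + s → a' ≤ t + s - j → b' ≤ t + s - j →
      ∑ k ∈ Finset.range (N + 1), ((N - (t + s) + j).choose k : ℂ) / ((Real.sqrt ((N.choose (k + a') * N.choose (k + b') : ℕ)) : ℝ) : ℂ) * ((starRingEnd ℂ) (α (k + a')) * β (k + b')) = 0) ↔
    (∀ j a' b' : ℕ, j ≤ t → a' ≤ t + s - j → b' ≤ t + s - j →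
      ∑ k ∈ Finset.range (N + 1), ((N - t - s + j).choose k : ℂ) / ((Real.sqrt ((N.choose (k + a') * N.choose (k + b') : ℕ)) : ℝ) : ℂ) * ((starRingEnd ℂ) (α (k + a')) * β (k + b')) = 0) := by
  simpa only [nsmul_eq_mul, div_eq_mul_inv, mul_assoc] using
    insertion_iff_semiInsdel_orthogonality_general (fun i l ↦
      ((Real.sqrt ((N.choose i * N.choose l : ℕ)) : ℝ) : ℂ)⁻¹ * ((starRingEnd ℂ) (α i) * β l)) hts
end
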